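/- limsup_{x→∞} T_c(x)/π(x) → 0 as c → 1⁻; that is, for every ε > 0 there exists c₀ with 0 < c₀ < 1 such that for every c with c₀ ≤ c < 1 there exists x₀ such that T_c(x) ≤ ε·π(x) for all x ≥ x₀. -/

import Mathlib

open Real Finset

attribute [local instance] Classical.propDecidable

/-- `Pplus n` is the largest prime factor of `n`, with the convention `Pplus 1 = 1`. -/
noncomputable def Pplus (n : ℕ) : ℕ := if n = 1 then 1 else n.primeFactors.sup id

/-- `primePi x` is the number of primes not exceeding `x`. -/
noncomputable def primePi (x : ℝ) : ℕ :=
  ((Finset.range (⌊x⌋₊ + 1)).filter Nat.Prime).card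

/-- `T c x = #{p ≤ x : p prime, P⁺(p-1) ≥ p^c}`. -/
noncomputable def T (c x : ℝ) : ℕ :=
  ((Finset.range (⌊x⌋₊ + 1)).filter
    (fun p : ℕ => p.Prime ∧ (p : ℝ) ^ c ≤ (Pplus (p - 1) : ℝ))).card


theorem crt_sum (a b : ℕ) (ha : 0 < a) (hb : 0 < b) (hab : Nat.Coprime a b) (A B : ℕ → ℝ)
    (hA : ∀ n, A (n % a) = A n) (hB : ∀ n, B (n % b) = B n) :
    ∑ n ∈ range (a * b), A n * B n = (∑ n ∈ range a, A n) * (∑ n ∈ range b, B n) := by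
  rw [Finset.sum_mul_sum, ← Finset.sum_product']
  refine Finset.sum_nbij (fun n => (n % a, n % b)) ?_ ?_ ?_ ?_
  · intro n _
    simp [Nat.mod_lt _ ha, Nat.mod_lt _ hb]
  · intro m hm n hn hmn
    simp only [Finset.coe_range, Set.mem_Iio, Prod.mk.injEq] at hm hn hmn
    have := (Nat.modEq_and_modEq_iff_modEq_mul hab).1 hmn
    exact Nat.ModEq.eq_of_lt_of_lt this hm hn
  · rintro ⟨u, v⟩ huv
    simp only [Finset.coe_product, Finset.coe_range, Set.mem_prod, Set.mem_Iio] at huv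
    refine ⟨Nat.chineseRemainder hab u v, ?_, ?_⟩
    · simpa using Nat.chineseRemainder_lt_mul hab u v ha.ne' hb.ne'
    · have h := (Nat.chineseRemainder hab u v).2
      simp only [Prod.mk.injEq]
      exact ⟨by rw [h.1, Nat.mod_eq_of_lt huv.1], by rw [h.2, Nat.mod_eq_of_lt huv.2]⟩
  · intro n _
    simp [hA, hB]

theorem prod_sum_crt (u : Finset ℕ) (hu : ∀ p ∈ u, p.Prime) (g : ℕ → ℕ → ℝ)
    (hg : ∀ p n, g p (n % p) = g p n) :
    ∑ n ∈ range (∏ p ∈ u, p), ∏ p ∈ u, g p n = ∏ p ∈ u, ∑ n ∈ range p, g p n := by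
  induction u using Finset.induction_on with
  | empty => simp
  | insert p u hp ih =>
    have hu' : ∀ q ∈ u, q.Prime := fun q hq => hu q (mem_insert_of_mem hq)
    have hpp : p.Prime := hu p (mem_insert_self _ _)
    rw [prod_insert hp, prod_insert hp, ← ih hu']
    simp_rw [prod_insert hp]
    refine crt_sum p (∏ q ∈ u, q) hpp.pos (Finset.prod_pos fun q hq => (hu' q hq).pos) ?_ _ _
      (hg p) ?_
    · refine Nat.Coprime.prod_right fun q hq => (Nat.coprime_primes hpp (hu' q hq)).2 ?_
      rintro rfl; exact hp hq
    · intro n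
      refine Finset.prod_congr rfl fun q hq => ?_
      rw [← hg q (n % _), Nat.mod_mod_of_dvd _ (Finset.dvd_prod_of_mem _ hq), hg]

theorem periodic_sum (D N : ℕ) (G : ℕ → ℝ) (hG : ∀ n, G (n + D) = G n) :
    ∑ n ∈ range N, G n = (N / D : ℕ) * (∑ n ∈ range D, G n) + ∑ n ∈ range (N % D), G n := by
  have key : ∀ k r, ∑ n ∈ range (D * k + r), G n = k * (∑ n ∈ range D, G n) + ∑ n ∈ range r, G n := by
    intro k r
    induction k with
    | zero => simp
    | succ k ih =>
      have : D * (k + 1) + r = D + (D * k + r) := by ring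
      rw [this, Finset.sum_range_add]
      have h2 : ∀ x, G (D + x) = G x := fun x => by rw [add_comm, hG]
      simp_rw [h2]
      rw [ih]; push_cast; ring
  conv_lhs => rw [← Nat.div_add_mod N D]
  exact key _ _

theorem sieve (P : Finset ℕ) (hP : ∀ p ∈ P, p.Prime) (f : ℕ → ℕ → ℝ) (h : ℕ → ℝ)
    (hf : ∀ p n, f p (n % p) = f p n)
    (hf0 : ∀ p ∈ P, ∑ n ∈ range p, f p n = 0)
    (hf2 : ∀ p ∈ P, ∑ n ∈ range p, f p n * f p n = p / h p)
    (hh : ∀ p ∈ P, 0 < h p)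
    (hfb : ∀ p ∈ P, ∀ n, |f p n| ≤ p) (Q N : ℕ) (hQ : 1 ≤ Q)
    (S : Finset ℕ) (hS : S ⊆ range N) (hS1 : ∀ n ∈ S, ∀ p ∈ P, f p n = 1) (L : ℝ)
    (hL : L = ∑ s ∈ P.powerset with ∏ p ∈ s, p ≤ Q, ∏ p ∈ s, h p) :
    (S.card : ℝ) ≤ N / L + Q ^ 4 := by
  set F := P.powerset.filter (fun s => ∏ p ∈ s, p ≤ Q) with hF
  have hFP : ∀ s ∈ F, s ⊆ P := fun s hs => by
    rw [hF, mem_filter, mem_powerset] at hs; exact hs.1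
  have hFQ : ∀ s ∈ F, ∏ p ∈ s, p ≤ Q := fun s hs => by
    rw [hF, mem_filter, mem_powerset] at hs; exact hs.2
  have hpos : ∀ s ∈ F, 0 < ∏ p ∈ s, h p := fun s hs =>
    Finset.prod_pos fun p hp => hh p (hFP s hs hp)
  have hLpos : 0 < L := by
    rw [hL]
    refine Finset.sum_pos hpos ⟨∅, ?_⟩
    simp [hF, hQ]
  have hfs : ∀ s ∈ F, ∀ n, |∏ p ∈ s, f p n| ≤ Q := by
    intro s hs n
    rw [Finset.abs_prod]
    calc ∏ p ∈ s, |f p n| ≤ ∏ p ∈ s, (p : ℝ) :=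
          Finset.prod_le_prod (fun _ _ => abs_nonneg _) fun p hp => hfb p (hFP s hs hp) n
      _ ≤ Q := by rw [← Nat.cast_prod]; exact_mod_cast hFQ s hs
  have hcorr : ∀ s ∈ F, ∀ t ∈ F, ∑ n ∈ range N, (∏ p ∈ s, f p n) * (∏ p ∈ t, f p n) ≤
      (if s = t then N / ∏ p ∈ s, h p else 0) + (Q : ℝ) ^ 4 := by
    intro s hs t ht
    set g : ℕ → ℕ → ℝ := fun p n => (if p ∈ s then f p n else 1) * (if p ∈ t then f p n else 1)
      with hg
    have hu : ∀ p ∈ s ∪ t, p.Prime := fun p hp => by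
      rcases mem_union.1 hp with h1 | h1
      · exact hP p (hFP s hs h1)
      · exact hP p (hFP t ht h1)
    have hgm : ∀ p n, g p (n % p) = g p n := by intro p n; simp [hg, hf]
    have hG : ∀ n, (∏ p ∈ s, f p n) * (∏ p ∈ t, f p n) = ∏ p ∈ s ∪ t, g p n := by
      intro n
      rw [hg, Finset.prod_mul_distrib, Finset.prod_ite_mem, Finset.prod_ite_mem,
        inter_eq_right.2 subset_union_left, inter_eq_right.2 subset_union_right]
    set D := ∏ p ∈ s ∪ t, p with hD
    have hDpos : 0 < D := Finset.prod_pos fun p hp => (hu p hp).pos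
    have hDle : D ≤ Q * Q := by
      have : D ∣ (∏ p ∈ s, p) * ∏ p ∈ t, p := by
        rw [← Finset.prod_union_inter]; exact dvd_mul_right _ _
      refine (Nat.le_of_dvd ?_ this).trans (Nat.mul_le_mul (hFQ s hs) (hFQ t ht))
      exact Nat.mul_pos (Finset.prod_pos fun p hp => (hu p (mem_union_left _ hp)).pos)
        (Finset.prod_pos fun p hp => (hu p (mem_union_right _ hp)).pos)
    have hper : ∀ n, (∏ p ∈ s ∪ t, g p (n + D)) = ∏ p ∈ s ∪ t, g p n := by
      intro n
      refine Finset.prod_congr rfl fun p hp => ?_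
      rw [← hgm p (n + D), ← hgm p n]
      congr 1
      obtain ⟨k, hk⟩ : p ∣ D := Finset.dvd_prod_of_mem _ hp
      rw [hk, Nat.add_mul_mod_self_left]
    have hfull : ∑ n ∈ range D, ∏ p ∈ s ∪ t, g p n = if s = t then D / ∏ p ∈ s, h p else 0 := by
      rw [hD, prod_sum_crt _ hu g hgm]
      split_ifs with hst
      · subst hst
        rw [union_self]
        push_cast
        rw [← Finset.prod_div_distrib]
        refine Finset.prod_congr rfl fun p hp => ?_
        simp only [hg, hp, if_true]
        exact hf2 p (hFP s hs hp)
      · obtain ⟨p, hp⟩ : ∃ p, ¬ (p ∈ s ↔ p ∈ t) := by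
          by_contra hcon; push Not at hcon; exact hst (Finset.ext hcon)
        by_cases hps : p ∈ s
        · have hpt : p ∉ t := by tauto
          refine Finset.prod_eq_zero (mem_union_left _ hps) ?_
          simp only [hg, hps, hpt, if_true, if_false, mul_one]
          exact hf0 p (hFP s hs hps)
        · have hpt : p ∈ t := by tauto
          refine Finset.prod_eq_zero (mem_union_right _ hpt) ?_
          simp only [hg, hps, hpt, if_true, if_false, one_mul]
          exact hf0 p (hFP t ht hpt)
    simp_rw [hG]
    rw [periodic_sum D N _ hper, hfull]
    refine add_le_add ?_ ?_
    · split_ifs with hst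
      · have h1 : ((N / D : ℕ) : ℝ) ≤ N / D := Nat.cast_div_le
        have h2 : (0:ℝ) < D := by exact_mod_cast hDpos
        have h3 := hpos s hs
        calc ((N / D : ℕ) : ℝ) * (D / ∏ p ∈ s, h p) ≤ N / D * (D / ∏ p ∈ s, h p) := by gcongr
          _ = _ := by field_simp
      · simp
    · calc ∑ n ∈ range (N % D), ∏ p ∈ s ∪ t, g p n ≤ ∑ n ∈ range (N % D), (Q : ℝ) * Q := by
            refine Finset.sum_le_sum fun n _ => ?_
            rw [← hG]
            refine (le_abs_self _).trans ?_
            rw [abs_mul]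
            exact mul_le_mul (hfs s hs n) (hfs t ht n) (abs_nonneg _) (by positivity)
        _ = (N % D : ℕ) * ((Q : ℝ) * Q) := by simp
        _ ≤ (Q * Q : ℕ) * ((Q : ℝ) * Q) := by
            gcongr
            exact (Nat.mod_lt _ hDpos).le.trans hDle
        _ = (Q : ℝ) ^ 4 := by push_cast; ring
  have hup : ∑ n ∈ range N, (∑ s ∈ F, (∏ p ∈ s, h p) * ∏ p ∈ s, f p n) ^ 2 ≤
      N * L + Q ^ 4 * L ^ 2 := by
    calc ∑ n ∈ range N, (∑ s ∈ F, (∏ p ∈ s, h p) * ∏ p ∈ s, f p n) ^ 2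
        = ∑ s ∈ F, ∑ t ∈ F, ((∏ p ∈ s, h p) * (∏ p ∈ t, h p)) *
            ∑ n ∈ range N, (∏ p ∈ s, f p n) * (∏ p ∈ t, f p n) := by
          simp_rw [sq, Finset.sum_mul_sum]
          rw [Finset.sum_comm]
          refine Finset.sum_congr rfl fun s _ => ?_
          rw [Finset.sum_comm]
          refine Finset.sum_congr rfl fun t _ => ?_
          rw [Finset.mul_sum]
          refine Finset.sum_congr rfl fun n _ => ?_
          ring
      _ ≤ ∑ s ∈ F, ∑ t ∈ F, ((∏ p ∈ s, h p) * (∏ p ∈ t, h p)) *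
            ((if s = t then N / ∏ p ∈ s, h p else 0) + (Q : ℝ) ^ 4) := by
          refine Finset.sum_le_sum fun s hs => Finset.sum_le_sum fun t ht => ?_
          exact mul_le_mul_of_nonneg_left (hcorr s hs t ht)
            (mul_pos (hpos s hs) (hpos t ht)).le
      _ = N * L + Q ^ 4 * L ^ 2 := by
          simp_rw [mul_add, Finset.sum_add_distrib, mul_ite, mul_zero]
          congr 1
          · rw [hL, Finset.mul_sum]
            refine Finset.sum_congr rfl fun s hs => ?_
            rw [Finset.sum_ite_eq, if_pos hs]
            have := hpos s hs
            field_simp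
          · simp_rw [← Finset.sum_mul]
            rw [← Finset.sum_mul_sum, ← hL]; ring
  have hlow : (S.card : ℝ) * L ^ 2 ≤
      ∑ n ∈ range N, (∑ s ∈ F, (∏ p ∈ s, h p) * ∏ p ∈ s, f p n) ^ 2 := by
    calc (S.card : ℝ) * L ^ 2 = ∑ n ∈ S, L ^ 2 := by simp
      _ = ∑ n ∈ S, (∑ s ∈ F, (∏ p ∈ s, h p) * ∏ p ∈ s, f p n) ^ 2 := by
          refine Finset.sum_congr rfl fun n hn => ?_
          congr 1
          rw [hL]
          refine Finset.sum_congr rfl fun s hs => ?_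
          rw [Finset.prod_eq_one fun p hp => hS1 n hn p (hFP s hs hp), mul_one]
      _ ≤ _ := Finset.sum_le_sum_of_subset_of_nonneg hS fun _ _ _ => sq_nonneg _
  have := hlow.trans hup
  rw [div_add' _ _ _ hLpos.ne', le_div_iff₀ hLpos]
  nlinarith

theorem sum_le_of_inj {α β : Type*} (s : Finset α) (t : Finset β) (e : α → β) (f : α → ℝ)
    (g : β → ℝ) (hm : ∀ a ∈ s, e a ∈ t) (hi : ∀ a ∈ s, ∀ b ∈ s, e a = e b → a = b)
    (hg : ∀ b ∈ t, 0 ≤ g b) (hfg : ∀ a ∈ s, f a ≤ g (e a)) :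
    ∑ a ∈ s, f a ≤ ∑ b ∈ t, g b := by
  classical
  calc ∑ a ∈ s, f a ≤ ∑ a ∈ s, g (e a) := Finset.sum_le_sum hfg
    _ = ∑ b ∈ s.image e, g b := by
        rw [Finset.sum_image]; intro a ha b hb h; exact hi a ha b hb h
    _ ≤ _ := by
        refine Finset.sum_le_sum_of_subset_of_nonneg ?_ fun b hb _ => hg b hb
        intro b hb
        obtain ⟨a, ha, rfl⟩ := Finset.mem_image.1 hb
        exact hm a ha

theorem sqfree_sum (Y : ℕ) : Real.log (Y + 1) ≤
    2 * ∑ a ∈ Icc 1 Y with Squarefree a, (1 : ℝ) / a := by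
  have h1 : Real.log (Y + 1) ≤ ∑ n ∈ Icc 1 Y, (1 : ℝ) / n := by
    have := log_add_one_le_harmonic Y
    rw [harmonic_eq_sum_Icc] at this
    push_cast at this
    simpa [one_div] using this
  have h2 : ∑ b ∈ Icc 1 Y, (1 : ℝ) / (b : ℝ) ^ 2 ≤ 2 := by
    have := sum_Ioo_inv_sq_le (α := ℝ) 0 (Y + 1)
    have e : Ioo 0 (Y + 1) = Icc 1 Y := by ext; simp; omega
    rw [e] at this
    simpa [one_div] using this
  choose! A B hAB hA using Nat.sq_mul_squarefree
  have h3 : ∑ n ∈ Icc 1 Y, (1 : ℝ) / n ≤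
      ∑ ab ∈ ((Icc 1 Y).filter Squarefree) ×ˢ (Icc 1 Y), (1 : ℝ) / ab.1 * (1 / (ab.2 : ℝ) ^ 2) := by
    refine sum_le_of_inj _ _ (fun n => (A n, B n)) _ _ ?_ ?_ ?_ ?_
    · intro n hn
      rw [mem_Icc] at hn
      have hab := hAB n
      have hA0 : 0 < A n := Nat.pos_of_ne_zero (by intro h; rw [h] at hab; omega)
      have hB0 : 0 < B n := Nat.pos_of_ne_zero (by intro h; rw [h] at hab; simp at hab; omega)
      have : A n ≤ n := Nat.le_of_dvd (by omega) ⟨B n ^ 2, by rw [mul_comm]; exact hab.symm⟩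
      have : B n ≤ n := Nat.le_of_dvd (by omega) ⟨B n * A n, by rw [← mul_assoc, ← sq]; exact hab.symm⟩
      simp only [mem_product, mem_filter, mem_Icc]
      exact ⟨⟨⟨hA0, by omega⟩, hA n⟩, hB0, by omega⟩
    · intro m _ n _ hmn
      simp only [Prod.mk.injEq] at hmn
      rw [← hAB m, ← hAB n, hmn.1, hmn.2]
    · intro b _; positivity
    · intro n _
      have : (n : ℝ) = (B n : ℝ) ^ 2 * A n := by exact_mod_cast (hAB n).symm
      rw [div_mul_div_comm, this]
      simp only [mul_one]
      rw [mul_comm]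
  rw [Finset.sum_product] at h3
  dsimp only at h3
  rw [← Finset.sum_mul_sum] at h3
  have h4 : 0 ≤ ∑ a ∈ Icc 1 Y with Squarefree a, (1 : ℝ) / a :=
    Finset.sum_nonneg fun _ _ => by positivity
  nlinarith

theorem sqfree_sum_coprime (Y p : ℕ) (hp : p.Prime) : Real.log (Y + 1) ≤
    3 * ∑ a ∈ Icc 1 Y with (Squarefree a ∧ ¬ p ∣ a), (1 : ℝ) / a := by
  have h1 := sqfree_sum Y
  have hs : ∑ a ∈ Icc 1 Y with Squarefree a, (1 : ℝ) / a =
      ∑ a ∈ Icc 1 Y with (Squarefree a ∧ p ∣ a), (1 : ℝ) / a +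
      ∑ a ∈ Icc 1 Y with (Squarefree a ∧ ¬ p ∣ a), (1 : ℝ) / a := by
    rw [← Finset.sum_filter_add_sum_filter_not _ (fun a => p ∣ a), Finset.filter_filter,
      Finset.filter_filter]
  have h2 : ∑ a ∈ Icc 1 Y with (Squarefree a ∧ p ∣ a), (1 : ℝ) / a ≤
      ∑ a ∈ Icc 1 Y with (Squarefree a ∧ ¬ p ∣ a), (1 / 2) * ((1 : ℝ) / a) := by
    refine sum_le_of_inj _ _ (fun a => a / p) _ _ ?_ ?_ ?_ ?_
    · intro a ha
      simp only [mem_filter, mem_Icc] at ha ⊢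
      obtain ⟨⟨h1, h2⟩, hsq, k, rfl⟩ := ha
      rw [Nat.mul_div_cancel_left _ hp.pos]
      have hk : 0 < k := Nat.pos_of_ne_zero (by rintro rfl; simp at h1)
      refine ⟨⟨hk, ?_⟩, hsq.of_mul_right, ?_⟩
      · nlinarith [hp.two_le]
      · rintro ⟨l, rfl⟩
        have := hsq p ⟨l, by ring⟩
        exact hp.one_lt.ne' (Nat.isUnit_iff.1 this)
    · intro a ha b hb hab
      simp only [mem_filter] at ha hb
      have h1 := Nat.div_mul_cancel ha.2.2
      have h2 := Nat.div_mul_cancel hb.2.2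
      have hab' : a / p = b / p := hab
      rw [← h1, ← h2, hab']
    · intro b _; positivity
    · intro a ha
      simp only [mem_filter, mem_Icc] at ha
      obtain ⟨⟨h1, h2⟩, hsq, k, rfl⟩ := ha
      rw [Nat.mul_div_cancel_left _ hp.pos]
      push_cast
      rw [div_mul_div_comm, mul_one]
      have hk : 0 < k := Nat.pos_of_ne_zero (by rintro rfl; simp at h1)
      have : (2:ℝ) ≤ p := by exact_mod_cast hp.two_le
      have : (0:ℝ) < k := by exact_mod_cast hk
      gcongr
  rw [← Finset.mul_sum] at h2
  linarith

theorem L_lower (z Y : ℕ) (h : ℕ → ℝ) (h1 : ∀ p, p.Prime → (1:ℝ) / p ≤ h p)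
    (h2 : ∀ p, p.Prime → z < p → (2:ℝ) / p ≤ h p) :
    (∑ p ∈ Ioc z Y with p.Prime, (1:ℝ) / p) * Real.log (Y + 1) ≤
    3 * ∑ s ∈ ((range (Y * Y + 1)).filter Nat.Prime).powerset with ∏ p ∈ s, p ≤ Y * Y,
      ∏ p ∈ s, h p := by
  have hh0 : ∀ p, p.Prime → 0 ≤ h p := fun p hp => le_trans (by positivity) (h1 p hp)
  have step1 : ∑ q ∈ Icc 1 (Y * Y) with Squarefree q,
      (((q.primeFactors.filter (fun p => z < p)).card : ℝ) / q) ≤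
      ∑ s ∈ ((range (Y * Y + 1)).filter Nat.Prime).powerset with ∏ p ∈ s, p ≤ Y * Y,
      ∏ p ∈ s, h p := by
    refine sum_le_of_inj _ _ (fun q => q.primeFactors) _ _ ?_ ?_ ?_ ?_
    · intro q hq
      simp only [mem_filter, mem_Icc] at hq
      rw [mem_filter, mem_powerset, Nat.prod_primeFactors_of_squarefree hq.2]
      refine ⟨?_, hq.1.2⟩
      intro p hp
      rw [mem_filter, mem_range]
      have := Nat.le_of_mem_primeFactors hp
      exact ⟨by omega, Nat.prime_of_mem_primeFactors hp⟩
    · intro a ha b hb hab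
      simp only [mem_filter] at ha hb hab
      rw [← Nat.prod_primeFactors_of_squarefree ha.2, ← Nat.prod_primeFactors_of_squarefree hb.2,
        hab]
    · intro s hs
      rw [mem_filter, mem_powerset] at hs
      refine Finset.prod_nonneg fun p hp => hh0 p ?_
      exact (mem_filter.1 (hs.1 hp)).2
    · intro q hq
      simp only [mem_filter, mem_Icc] at hq
      calc (((q.primeFactors.filter (fun p => z < p)).card : ℝ) / q)
          ≤ 2 ^ ((q.primeFactors.filter (fun p => z < p)).card) / q := by
            gcongr
            exact_mod_cast Nat.lt_two_pow_self.le
        _ = ∏ p ∈ q.primeFactors, ((if z < p then (2:ℝ) else 1) / p) := by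
            rw [Finset.prod_div_distrib, Finset.prod_ite, Finset.prod_const, Finset.prod_const_one,
              mul_one]
            congr 1
            rw [← Nat.cast_prod, Nat.prod_primeFactors_of_squarefree hq.2]
        _ ≤ ∏ p ∈ q.primeFactors, h p := by
            refine Finset.prod_le_prod (fun p _ => by positivity) fun p hp => ?_
            have hpp := Nat.prime_of_mem_primeFactors hp
            split_ifs with hz
            · exact h2 p hpp hz
            · exact h1 p hpp
  have step2 : ∑ p ∈ Ioc z Y with p.Prime, ∑ a ∈ Icc 1 Y with (Squarefree a ∧ ¬ p ∣ a),
      (1:ℝ) / (p * a) ≤ ∑ q ∈ Icc 1 (Y * Y) with Squarefree q,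
      (((q.primeFactors.filter (fun p => z < p)).card : ℝ) / q) := by
    have e : ∀ q : ℕ, (((q.primeFactors.filter (fun p => z < p)).card : ℝ) / q) =
        ∑ p ∈ q.primeFactors.filter (fun p => z < p), (1:ℝ) / q := by
      intro q; simp [div_eq_mul_inv]
    simp_rw [e]
    rw [Finset.sum_sigma', Finset.sum_sigma']
    refine sum_le_of_inj _ _ (fun x => ⟨x.1 * x.2, x.1⟩) _ _ ?_ ?_ ?_ ?_
    · rintro ⟨p, a⟩ hx
      simp only [mem_sigma, mem_filter, mem_Ioc, mem_Icc] at hx ⊢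
      obtain ⟨⟨⟨hz, hY⟩, hp⟩, ⟨ha1, haY⟩, hsq, hnd⟩ := hx
      have hpos : 0 < p * a := Nat.mul_pos hp.pos ha1
      refine ⟨⟨⟨hpos, Nat.mul_le_mul hY haY⟩, ?_⟩, ?_, hz⟩
      · rw [Nat.squarefree_mul ((Nat.Prime.coprime_iff_not_dvd hp).2 hnd)]
        exact ⟨hp.prime.squarefree, hsq⟩
      · exact Nat.mem_primeFactors.2 ⟨hp, dvd_mul_right _ _, hpos.ne'⟩
    · rintro ⟨p, a⟩ hx ⟨p', a'⟩ hx' hh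
      simp only [Sigma.mk.injEq, heq_eq_eq] at hh
      simp only [mem_sigma, mem_filter, mem_Ioc, mem_Icc] at hx
      obtain ⟨h1, rfl⟩ := hh
      have := Nat.eq_of_mul_eq_mul_left hx.1.2.pos h1
      rw [this]
    · intro b _; positivity
    · rintro ⟨p, a⟩ hx
      push_cast
      exact le_rfl
  have step3 : (∑ p ∈ Ioc z Y with p.Prime, (1:ℝ) / p) * Real.log (Y + 1) ≤
      3 * ∑ p ∈ Ioc z Y with p.Prime, ∑ a ∈ Icc 1 Y with (Squarefree a ∧ ¬ p ∣ a),
      (1:ℝ) / (p * a) := by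
    rw [Finset.sum_mul, Finset.mul_sum]
    refine Finset.sum_le_sum fun p hp => ?_
    have := sqfree_sum_coprime Y p (mem_filter.1 hp).2
    calc (1:ℝ) / p * Real.log (Y + 1) ≤ 1 / p *
          (3 * ∑ a ∈ Icc 1 Y with (Squarefree a ∧ ¬ p ∣ a), (1 : ℝ) / a) := by gcongr
      _ = _ := by
        rw [mul_left_comm, Finset.mul_sum]
        congr 1
        refine Finset.sum_congr rfl fun a _ => ?_
        rw [div_mul_div_comm, mul_one]
  linarith

theorem sieve_apply (z Y N : ℕ) (hz : 2 ≤ z) (hY : 1 ≤ Y) (V : ℝ) (hV : 0 < V)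
    (hVL : 3 * V ≤ (∑ p ∈ Ioc z Y with p.Prime, (1:ℝ) / p) * Real.log (Y + 1))
    (S : Finset ℕ) (hS : S ⊆ range N)
    (hS1 : ∀ n ∈ S, ∀ p, p.Prime → p ≤ Y * Y → n % p ≠ 0 ∧ (z < p → n % p ≠ 1)) :
    (S.card : ℝ) ≤ N / V + (Y : ℝ) ^ 8 := by
  set w : ℕ → ℕ := fun p => if z < p then 2 else 1 with hw
  set bad : ℕ → ℕ → Prop := fun p n => n % p = 0 ∨ (z < p ∧ n % p = 1) with hbad
  set f : ℕ → ℕ → ℝ := fun p n => if bad p n then 1 - (p:ℝ) / w p else 1 with hf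
  set h : ℕ → ℝ := fun p => (w p : ℝ) / (p - w p) with hh
  have hw1 : ∀ p, 1 ≤ w p := fun p => by simp only [hw]; split_ifs <;> omega
  have hwp : ∀ p, p.Prime → w p < p := fun p hp => by
    have := hp.two_le
    simp only [hw]; split_ifs <;> omega
  have hcard : ∀ p, p.Prime → ((range p).filter (bad p)).card = w p := by
    intro p hp
    have h2 := hp.two_le
    by_cases hzp : z < p
    · have : (range p).filter (bad p) = {0, 1} := by
        ext n
        simp only [hbad, hzp, true_and, mem_filter, mem_range, mem_insert, mem_singleton]
        constructor
        · rintro ⟨h1, h3⟩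
          rwa [Nat.mod_eq_of_lt h1] at h3
        · intro h3
          have h1 : n < p := by omega
          rw [Nat.mod_eq_of_lt h1]
          exact ⟨h1, h3⟩
      rw [this]; simp [hw, hzp]
    · have : (range p).filter (bad p) = {0} := by
        ext n
        simp only [hbad, hzp, false_and, or_false, mem_filter, mem_range, mem_singleton]
        constructor
        · rintro ⟨h1, h3⟩
          rwa [Nat.mod_eq_of_lt h1] at h3
        · intro h3
          have h1 : n < p := by omega
          rw [Nat.mod_eq_of_lt h1]
          exact ⟨h1, h3⟩
      rw [this]; simp [hw, hzp]
  have hsum : ∀ p, p.Prime → ∀ c : ℝ, ∑ n ∈ range p, (if bad p n then c else 0) = w p * c := by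
    intro p hp c
    rw [← Finset.sum_filter, Finset.sum_const, hcard p hp, nsmul_eq_mul]
  have hPr : ∀ p ∈ (range (Y * Y + 1)).filter Nat.Prime, p.Prime := fun p hp => (mem_filter.1 hp).2
  have hwR : ∀ p, (0:ℝ) < w p := fun p => by exact_mod_cast hw1 p
  have hwpR : ∀ p, p.Prime → (0:ℝ) < p - w p := fun p hp => by
    have : (w p : ℝ) < p := by exact_mod_cast hwp p hp
    linarith
  have key := sieve ((range (Y * Y + 1)).filter Nat.Prime) hPr f h ?_ ?_ ?_ ?_ ?_ (Y * Y) N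
    (Nat.mul_pos hY hY) S hS ?_ _ rfl
  · have hL := L_lower z Y h ?_ ?_
    · refine key.trans ?_
      push_cast
      have e : ((Y:ℝ) * Y) ^ 4 = (Y:ℝ) ^ 8 := by ring
      rw [e]
      gcongr
      linarith
    · intro p hp
      have := hwpR p hp
      have h1 : (1:ℝ) ≤ w p := by exact_mod_cast hw1 p
      simp only [hh]
      gcongr
      linarith
    · intro p hp hzp
      have := hwpR p hp
      have h1 : (2:ℝ) = w p := by simp [hw, hzp]
      simp only [hh]
      rw [← h1] at this ⊢
      gcongr
      linarith
  · intro p n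
    simp only [hf, hbad, Nat.mod_mod]
  · intro p hp
    have hp := hPr p hp
    have e : ∀ n, f p n = 1 + (if bad p n then - ((p:ℝ) / w p) else 0) := by
      intro n; simp only [hf]; split_ifs <;> ring
    simp_rw [e]
    rw [Finset.sum_add_distrib, hsum p hp]
    have := hwR p
    simp only [sum_const, card_range, nsmul_eq_mul]
    field_simp
    ring
  · intro p hp
    have hp := hPr p hp
    have e : ∀ n, f p n * f p n = 1 + (if bad p n then (1 - (p:ℝ) / w p) ^ 2 - 1 else 0) := by
      intro n; simp only [hf]; split_ifs <;> ring
    simp_rw [e]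
    rw [Finset.sum_add_distrib, hsum p hp]
    have := hwR p
    have := hwpR p hp
    simp only [sum_const, card_range, nsmul_eq_mul, hh]
    field_simp
    ring
  · intro p hp
    exact div_pos (hwR p) (hwpR p (hPr p hp))
  · intro p hp n
    have hp := hPr p hp
    have h2 : (2:ℝ) ≤ p := by exact_mod_cast hp.two_le
    have h1 : (1:ℝ) ≤ w p := by exact_mod_cast hw1 p
    simp only [hf]
    split_ifs
    · have h3 : (p:ℝ) / w p ≤ p := div_le_self (by linarith) h1
      have h4 : 0 ≤ (p:ℝ) / w p := by positivity
      rw [abs_le]; constructor <;> linarith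
    · rw [abs_one]; linarith
  · intro n hn p hp
    have hpY : p ≤ Y * Y := by
      have := mem_range.1 (mem_filter.1 hp).1; omega
    have := hS1 n hn p (hPr p hp) hpY
    simp only [hf, hbad]
    rw [if_neg]
    tauto

theorem theta_gap : ∃ n0 : ℕ, ∀ n : ℕ, n0 ≤ n →
    (n : ℝ) ≤ Chebyshev.theta ((4 * n : ℕ) : ℝ) - Chebyshev.theta n := by
  have h1 : (fun n : ℕ => Real.log ((4 * n : ℕ) + 1) + 2 * √((4 * n : ℕ):ℝ) * Real.log ((4 * n : ℕ):ℝ))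
      =o[Filter.atTop] (fun n : ℕ => (n : ℝ)) := by
    have a1 : (fun x : ℝ => Real.log (x + 1) + 2 * √x * Real.log x) =o[Filter.atTop] (fun x => x) := by
      refine Asymptotics.IsLittleO.add ?_ ?_
      · have := (Real.isLittleO_log_id_atTop).comp_tendsto
          (Filter.tendsto_atTop_add_const_right Filter.atTop (1:ℝ) Filter.tendsto_id)
        refine this.trans_isBigO ?_
        refine Asymptotics.IsBigO.of_bound 2 ?_
        filter_upwards [Filter.eventually_ge_atTop 1] with x hx
        simp only [Function.comp, id, Real.norm_eq_abs]
        rw [abs_of_nonneg (by linarith), abs_of_nonneg (by linarith)]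
        linarith
      · have := isLittleO_log_rpow_atTop (show (0:ℝ) < 1/2 by norm_num)
        have h2 := (Asymptotics.isBigO_refl (fun x : ℝ => 2 * √x) Filter.atTop).mul_isLittleO this
        refine h2.trans_isBigO ?_
        refine Asymptotics.IsBigO.of_bound 2 ?_
        filter_upwards [Filter.eventually_ge_atTop 1] with x hx
        rw [← Real.sqrt_eq_rpow, mul_assoc, Real.mul_self_sqrt (by linarith), norm_mul]
        simp
    have t : Filter.Tendsto (fun n : ℕ => ((4 * n : ℕ) : ℝ)) Filter.atTop Filter.atTop := by
      refine tendsto_natCast_atTop_atTop.comp ?_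
      exact Filter.tendsto_atTop_mono (fun n => by simp only [id]; omega) Filter.tendsto_id
    refine (a1.comp_tendsto t).trans_isBigO ?_
    refine Asymptotics.IsBigO.of_bound 4 ?_
    filter_upwards with n
    simp
  have h2 := h1.bound (show (0:ℝ) < 1/4 by norm_num)
  obtain ⟨n0, hn0⟩ := Filter.eventually_atTop.1 h2
  refine ⟨n0, fun n hn => ?_⟩
  have h3 := (le_abs_self _).trans (hn0 n hn)
  have h4 := Chebyshev.theta_ge (4 * n)
  have h5 := Chebyshev.theta_le_log4_mul_x (x := n) (by positivity)
  have h6 : Real.log 4 = 2 * Real.log 2 := by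
    rw [show (4:ℝ) = 2 ^ 2 by norm_num, Real.log_pow]; norm_num
  have h7 := Real.log_two_gt_d9
  rw [h6] at h5
  rw [Real.norm_eq_abs, Nat.abs_cast] at h3
  have h8 : (0:ℝ) ≤ n := by positivity
  push_cast at *
  nlinarith

theorem recip_gap (n : ℕ) (hn : 1 ≤ n)
    (h : (n : ℝ) ≤ Chebyshev.theta ((4 * n : ℕ) : ℝ) - Chebyshev.theta n) :
    1 / (4 * Real.log (4 * n)) ≤ ∑ p ∈ Ioc n (4 * n) with p.Prime, (1:ℝ) / p := by
  have hnR : (1:ℝ) ≤ n := by exact_mod_cast hn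
  have hlog : 0 < Real.log (4 * n) := Real.log_pos (by linarith)
  have h1 : Chebyshev.theta ((4 * n : ℕ) : ℝ) - Chebyshev.theta n =
      ∑ p ∈ Ioc n (4 * n) with p.Prime, Real.log p := by
    rw [Chebyshev.theta, Chebyshev.theta, Nat.floor_natCast, Nat.floor_natCast, sub_eq_iff_eq_add,
      Finset.sum_filter, Finset.sum_filter, Finset.sum_filter, add_comm]
    exact (Finset.sum_Ioc_consecutive _ (Nat.zero_le _) (by omega)).symm
  have h2 : ∑ p ∈ Ioc n (4 * n) with p.Prime, Real.log p ≤
      (4 * n * Real.log (4 * n)) * ∑ p ∈ Ioc n (4 * n) with p.Prime, (1:ℝ) / p := by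
    rw [Finset.mul_sum]
    refine Finset.sum_le_sum fun p hp => ?_
    rw [mem_filter, mem_Ioc] at hp
    have hp0 : (0:ℝ) < p := by exact_mod_cast hp.2.pos
    have hp4 : (p:ℝ) ≤ 4 * n := by exact_mod_cast hp.1.2
    have hl : Real.log p ≤ Real.log (4 * n) := Real.log_le_log hp0 hp4
    rw [mul_one_div, le_div_iff₀ hp0, mul_comm]
    exact mul_le_mul hp4 hl (Real.log_natCast_nonneg p) (by positivity)
  rw [div_le_iff₀ (by positivity)]
  rw [h1] at h
  have := h.trans h2
  have h5 : (n:ℝ) * 1 ≤ n * ((∑ p ∈ Ioc n (4 * n) with p.Prime, (1:ℝ) / p) *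
      (4 * Real.log (4 * n))) := by linarith
  exact le_of_mul_le_mul_left h5 (by linarith)

theorem recip_sum : ∃ J0 : ℕ, ∀ J K : ℕ, J0 ≤ J → J ≤ K →
    Real.log ((K + 1) / (J + 1)) ≤ 6 * ∑ p ∈ Ioc ((4:ℕ) ^ J) (4 ^ K) with p.Prime, (1:ℝ) / p := by
  obtain ⟨n0, hn0⟩ := theta_gap
  refine ⟨n0, fun J K hJ hJK => ?_⟩
  induction K, hJK using Nat.le_induction with
  | base => 
    rw [div_self (by positivity)]; simp
  | succ K hK ih =>
    have h4 : n0 ≤ 4 ^ K := (hJ.trans hK).trans (Nat.lt_pow_self (by norm_num)).le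
    have h1 := recip_gap (4 ^ K) (Nat.one_le_pow _ _ (by norm_num)) (hn0 _ h4)
    have e : 4 * 4 ^ K = 4 ^ (K + 1) := by ring
    have e2 : (4:ℝ) * ((4 ^ K : ℕ) : ℝ) = 4 ^ (K + 1) := by push_cast; ring
    rw [e2, e, Real.log_pow] at h1
    have h2 : ∑ p ∈ Ioc ((4:ℕ) ^ J) (4 ^ (K + 1)) with p.Prime, (1:ℝ) / p =
        ∑ p ∈ Ioc ((4:ℕ) ^ J) (4 ^ K) with p.Prime, (1:ℝ) / p +
        ∑ p ∈ Ioc ((4:ℕ) ^ K) (4 ^ (K + 1)) with p.Prime, (1:ℝ) / p := by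
      simp_rw [Finset.sum_filter]
      exact (Finset.sum_Ioc_consecutive _ (Nat.pow_le_pow_right (by norm_num) hK)
        (Nat.pow_le_pow_right (by norm_num) (by omega))).symm
    rw [h2]
    have h6 : Real.log 4 = 2 * Real.log 2 := by
      rw [show (4:ℝ) = 2 ^ 2 by norm_num, Real.log_pow]; norm_num
    have h7 := Real.log_two_lt_d9
    have h7' := Real.log_two_gt_d9
    have h8 : Real.log (((K + 1 : ℕ) + 1) / (J + 1)) =
        Real.log ((K + 1) / (J + 1)) + Real.log (1 + 1 / (K + 1)) := by
      rw [← Real.log_mul (by positivity) (by positivity)]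
      congr 1
      push_cast
      field_simp
    have h9 : Real.log (1 + 1 / ((K:ℝ) + 1)) ≤ 1 / (K + 1) := by
      have := Real.log_le_sub_one_of_pos (show (0:ℝ) < 1 + 1 / ((K:ℝ) + 1) by positivity)
      linarith
    have h10 : 1 / ((K:ℝ) + 1) ≤ 6 * (1 / (4 * ((K + 1 : ℕ) * Real.log 4))) := by
      have hK : (0:ℝ) < K + 1 := by positivity
      rw [h6]
      push_cast
      rw [mul_one_div, div_le_div_iff₀ (by positivity) (by positivity)]
      nlinarith
    rw [h8]
    linarith

theorem Pplus_prime_dvd (m : ℕ) (hm : 2 ≤ m) : (Pplus m).Prime ∧ Pplus m ∣ m := by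
  have h1 : m ≠ 1 := by omega
  have hne : m.primeFactors.Nonempty := Nat.nonempty_primeFactors.2 (by omega)
  obtain ⟨p, hp, he⟩ := Finset.exists_mem_eq_sup _ hne id
  rw [Pplus, if_neg h1, he]
  exact ⟨Nat.prime_of_mem_primeFactors hp, Nat.dvd_of_mem_primeFactors hp⟩

theorem T_bound (c x V : ℝ) (z Y : ℕ) (hc : 1 / 2 ≤ c) (hc1 : c < 1) (hx : 4 ≤ x) (hz : 2 ≤ z)
    (hY : 1 ≤ Y) (hzx : x ^ (1 - c) ≤ z) (hYx : (Y : ℝ) ^ 8 ≤ √x) (hV : 0 < V)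
    (hVL : 3 * V ≤ (∑ p ∈ Ioc z Y with p.Prime, (1:ℝ) / p) * Real.log (Y + 1)) :
    (T c x : ℝ) ≤ 2 * √x + 1 + (x + 1) / V := by
  have hsx : 2 ≤ √x := Real.le_sqrt_of_sq_le (by linarith)
  have hsxx : √x * √x = x := Real.mul_self_sqrt (by linarith)
  set S := (range (⌊x⌋₊ + 1)).filter
    (fun p : ℕ => (p.Prime ∧ (p : ℝ) ^ c ≤ (Pplus (p - 1) : ℝ)) ∧ √x < p) with hS
  have hYR : (1:ℝ) ≤ Y := by exact_mod_cast hY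
  have hSc := sieve_apply z Y (⌊x⌋₊ + 1) hz hY V hV hVL S (Finset.filter_subset _ _) ?_
  · have hT : T c x ≤ S.card + (range (⌊√x⌋₊ + 1)).card := by
      rw [T]
      refine (Finset.card_le_card ?_).trans (Finset.card_union_le _ _)
      intro p hp
      rw [mem_filter] at hp
      rw [mem_union]
      by_cases h : √x < p
      · left
        rw [hS, mem_filter]
        exact ⟨hp.1, hp.2, h⟩
      · right
        rw [mem_range]
        have := Nat.le_floor (not_lt.1 h)
        omega
    have hT' : (T c x : ℝ) ≤ S.card + (⌊√x⌋₊ + 1) := by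
      rw [card_range] at hT
      exact_mod_cast hT
    have h1 : (⌊√x⌋₊ : ℝ) ≤ √x := Nat.floor_le (by positivity)
    have h2 : (⌊x⌋₊ : ℝ) ≤ x := Nat.floor_le (by linarith)
    have h3 : ((⌊x⌋₊ + 1 : ℕ) : ℝ) / V ≤ (x + 1) / V := by
      push_cast
      gcongr
    linarith
  · intro p hp l hl hlY
    rw [hS, mem_filter, mem_range] at hp
    obtain ⟨hpx, ⟨hpp, hpc⟩, hps⟩ := hp
    have hpx' : (p:ℝ) ≤ x := (Nat.le_floor_iff (by linarith)).1 (by omega)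
    have hp0 : (0:ℝ) < p := by linarith
    have hlYR : (l:ℝ) ≤ Y ^ 2 := by rw [sq]; exact_mod_cast hlY
    have hl1 : (1:ℝ) ≤ l := by exact_mod_cast hl.one_lt.le
    have hl4 : (l:ℝ) ^ 4 ≤ √x := by
      calc (l:ℝ) ^ 4 ≤ (Y ^ 2) ^ 4 := by gcongr
        _ = (Y:ℝ) ^ 8 := by ring
        _ ≤ _ := hYx
    have hl2 : (l:ℝ) ^ 2 ≤ l ^ 4 := pow_le_pow_right₀ hl1 (by norm_num)
    have hll : (l:ℝ) ≤ l ^ 2 := le_self_pow₀ hl1 (by norm_num)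
    have hlp : l < p := by
      have : (l:ℝ) < p := by linarith
      exact_mod_cast this
    refine ⟨?_, ?_⟩
    · intro h0
      have hd : l ∣ p := Nat.dvd_of_mod_eq_zero h0
      rcases (Nat.dvd_prime hpp).1 hd with h | h
      · exact hl.one_lt.ne' h
      · omega
    · intro hzl h1
      have hp3 : 3 ≤ p := by
        have := hl.two_le
        omega
      obtain ⟨hr, hrd⟩ := Pplus_prime_dvd (p - 1) (by omega)
      set r := Pplus (p - 1) with hrdef
      have hld : l ∣ p - 1 := (Nat.modEq_iff_dvd' (by omega)).1 (by
        rw [Nat.ModEq, h1, Nat.mod_eq_of_lt hl.one_lt])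
      have hlr : (l:ℝ) < r := by
        have h2 : (l:ℝ) < (p:ℝ) ^ (1/2 : ℝ) := by
          rw [← Real.sqrt_eq_rpow]
          refine Real.lt_sqrt_of_sq_lt ?_
          linarith
        have h3 : (p:ℝ) ^ (1/2 : ℝ) ≤ (p:ℝ) ^ c :=
          Real.rpow_le_rpow_of_exponent_le (by linarith) hc
        linarith
      have hlr' : l ≠ r := by
        have : l < r := by exact_mod_cast hlr
        omega
      have hdvd : l * r ∣ p - 1 :=
        Nat.Coprime.mul_dvd_of_dvd_of_dvd ((Nat.coprime_primes hl hr).2 hlr') hld hrd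
      have hle : l * r ≤ p - 1 := Nat.le_of_dvd (by omega) hdvd
      have hlt : (l:ℝ) * r < p := by
        have : l * r < p := by omega
        exact_mod_cast this
      have h4 : (p:ℝ) ^ (1 - c) ≤ x ^ (1 - c) := Real.rpow_le_rpow hp0.le hpx' (by linarith)
      have h5 : (p:ℝ) ^ (1 - c) * (p:ℝ) ^ c = p := by
        rw [← Real.rpow_add hp0]; simp
      have h6 : (z:ℝ) < l := by exact_mod_cast hzl
      have h7 : 0 < (p:ℝ) ^ c := Real.rpow_pos_of_pos hp0 c
      have h8 : (p:ℝ) ^ (1 - c) * (p:ℝ) ^ c ≤ l * (p:ℝ) ^ c :=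
        mul_le_mul_of_nonneg_right (by linarith) h7.le
      have h9 : (l:ℝ) * (p:ℝ) ^ c ≤ l * r := by gcongr
      linarith

theorem primePi_lower : ∀ᶠ x : ℝ in Filter.atTop, x / (2 * Real.log x) ≤ primePi x := by
  have h1 : (fun x : ℝ => Real.log (x + 2)) =o[Filter.atTop] (fun x : ℝ => x) := by
    have := (Real.isLittleO_log_id_atTop).comp_tendsto
      (Filter.tendsto_atTop_add_const_right Filter.atTop (2:ℝ) Filter.tendsto_id)
    refine this.trans_isBigO ?_
    refine Asymptotics.IsBigO.of_bound 2 ?_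
    filter_upwards [Filter.eventually_ge_atTop 2] with x hx
    simp only [Function.comp, id, Real.norm_eq_abs]
    rw [abs_of_nonneg (by linarith), abs_of_nonneg (by linarith)]
    linarith
  filter_upwards [h1.bound (show (0:ℝ) < 1/10 by norm_num), Filter.eventually_ge_atTop 100] with x h2 hx
  have h3 := Chebyshev.pi_ge' (x := x) (by linarith)
  have e : primePi x = Nat.primeCounting ⌊x⌋₊ := by
    rw [primePi, Nat.primeCounting, Nat.primeCounting', Nat.count_eq_card_filter_range]
  rw [e]
  refine le_trans ?_ h3
  have hl : 0 < Real.log x := Real.log_pos (by linarith)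
  rw [← div_div]
  gcongr
  have h4 := (le_abs_self _).trans h2
  rw [Real.norm_eq_abs, abs_of_nonneg (by linarith)] at h4
  have := Real.log_two_gt_d9
  nlinarith

theorem sqrt_small (ε : ℝ) (hε : 0 < ε) :
    ∀ᶠ x : ℝ in Filter.atTop, 2 * √x + 1 ≤ ε * (x / Real.log x) := by
  have h0 := isLittleO_log_rpow_atTop (show (0:ℝ) < 1/2 by norm_num)
  filter_upwards [h0.bound (show (0:ℝ) < ε / 3 by positivity), Filter.eventually_ge_atTop 2] with x h2 hx
  have hl : 0 < Real.log x := Real.log_pos (by linarith)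
  rw [← Real.sqrt_eq_rpow, Real.norm_eq_abs, Real.norm_eq_abs, abs_of_pos hl,
    abs_of_nonneg (Real.sqrt_nonneg _)] at h2
  have h1 : 1 ≤ √x := Real.one_le_sqrt.2 (by linarith)
  have hsxx : √x * √x = x := Real.mul_self_sqrt (by linarith)
  rw [← mul_div_assoc, le_div_iff₀ hl]
  calc (2 * √x + 1) * Real.log x ≤ (3 * √x) * (ε / 3 * √x) := by
        gcongr
        linarith
    _ = ε * (√x * √x) := by ring
    _ = ε * x := by rw [hsxx]

/-- `limsup_{x→∞} T_c(x)/π(x) → 0` as `c → 1⁻`. -/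
theorem limsup_T_div_pi_tendsto_zero :
    ∀ ε > 0, ∃ c₀ : ℝ, 0 < c₀ ∧ c₀ < 1 ∧
      ∀ c : ℝ, c₀ ≤ c → c < 1 →
        ∃ x₀ : ℝ, ∀ x ≥ x₀, (T c x : ℝ) ≤ ε * (primePi x : ℝ) := by
  intro ε hε
  obtain ⟨J0, hJ0⟩ := recip_sum
  set B : ℝ := 9216 / ε with hB
  have hBpos : 0 < B := by positivity
  set δ : ℝ := Real.exp (-B) / 32 with hδ
  have hδpos : 0 < δ := by positivity
  have hδ1 : δ < 1 / 32 := by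
    have : Real.exp (-B) < 1 := Real.exp_lt_one_iff.2 (by linarith)
    rw [hδ]; linarith
  refine ⟨1 - δ, by linarith, by linarith, fun c hc hc1 => ?_⟩
  have hl4 : (0:ℝ) < Real.log 4 := Real.log_pos (by norm_num)
  have hl4' : Real.log 4 < 2 := by
    have h6 : Real.log 4 = 2 * Real.log 2 := by
      rw [show (4:ℝ) = 2 ^ 2 by norm_num, Real.log_pow]; norm_num
    have := Real.log_two_lt_d9
    linarith
  have hl4'' : 1 < Real.log 4 := by
    have h6 : Real.log 4 = 2 * Real.log 2 := by
      rw [show (4:ℝ) = 2 ^ 2 by norm_num, Real.log_pow]; norm_num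
    have := Real.log_two_gt_d9
    linarith
  have ht : Filter.Tendsto (fun x : ℝ => Real.log x / Real.log 4) Filter.atTop Filter.atTop :=
    Real.tendsto_log_atTop.atTop_div_const hl4
  obtain ⟨x₀, hx₀⟩ := Filter.eventually_atTop.1 ((primePi_lower.and (sqrt_small (ε / 4) (by positivity))).and
    (((Filter.eventually_ge_atTop (4:ℝ)).and (ht.eventually_ge_atTop (2 / δ))).and
     ((ht.eventually_ge_atTop ((J0 + 1) / (1 - c))).and (ht.eventually_ge_atTop 32))))
  refine ⟨x₀, fun x hx => ?_⟩
  obtain ⟨⟨hpi, hsq⟩, ⟨hx4, ht1⟩, ht2, ht3⟩ := hx₀ x hx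
  set t : ℝ := Real.log x / Real.log 4 with htdef
  have hxpos : 0 < x := by linarith
  have hlogx : 0 < Real.log x := Real.log_pos (by linarith)
  have hxt : (4:ℝ) ^ t = x := by
    rw [Real.rpow_def_of_pos (by norm_num), htdef, mul_div_cancel₀ _ hl4.ne', Real.exp_log hxpos]
  set K : ℕ := ⌊t / 16⌋₊ with hK
  set J : ℕ := ⌈(1 - c) * t⌉₊ with hJ
  have hKle : (K:ℝ) ≤ t / 16 := Nat.floor_le (by linarith)
  have hKge : t / 16 < K + 1 := Nat.lt_floor_add_one _
  have hJge : (1 - c) * t ≤ J := Nat.le_ceil _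
  have hct : (J0:ℝ) + 1 ≤ (1 - c) * t := by
    rw [div_le_iff₀ (by linarith)] at ht2; linarith
  have hJlt : (J:ℝ) < (1 - c) * t + 1 := Nat.ceil_lt_add_one (by linarith)
  have hJJ0 : J0 + 1 ≤ J := by
    have : (J0:ℝ) + 1 ≤ J := by linarith
    exact_mod_cast this
  have hdt : 2 ≤ δ * t := by
    rw [div_le_iff₀ hδpos] at ht1; linarith
  have hJd : (J:ℝ) + 1 ≤ 2 * δ * t := by
    have : (1 - c) * t ≤ δ * t := by
      apply mul_le_mul_of_nonneg_right <;> linarith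
    linarith
  have hJK : J ≤ K := by
    have h1 : 2 * δ * t ≤ t / 16 := by
      have : δ * t ≤ 1 / 32 * t := mul_le_mul_of_nonneg_right hδ1.le (by linarith)
      linarith
    have : (J:ℝ) < K + 1 := by linarith
    have : J < K + 1 := by exact_mod_cast this
    omega
  have hrec := hJ0 J K (by omega) hJK
  have hratio : B ≤ Real.log (((K:ℝ) + 1) / (J + 1)) := by
    rw [Real.le_log_iff_exp_le (by positivity), le_div_iff₀ (by positivity)]
    calc Real.exp B * (J + 1) ≤ Real.exp B * (2 * δ * t) := by gcongr
      _ = (Real.exp B * Real.exp (-B)) * (t / 16) := by rw [hδ]; ring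
      _ = t / 16 := by rw [← Real.exp_add]; simp
      _ ≤ K + 1 := hKge.le
  have hKlog : (K:ℝ) ≤ Real.log (((4 ^ K : ℕ) : ℝ) + 1) := by
    calc (K:ℝ) ≤ K * Real.log 4 := le_mul_of_one_le_right (by positivity) hl4''.le
      _ = Real.log (4 ^ K) := by rw [Real.log_pow]
      _ ≤ _ := by
        push_cast
        exact Real.log_le_log (by positivity) (by linarith)
  have hKt : Real.log x / 64 ≤ K := by
    have : Real.log x = t * Real.log 4 := by rw [htdef]; field_simp
    have : Real.log x ≤ t * 2 := by rw [this]; gcongr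
    linarith
  have hTb := T_bound c x (B * Real.log x / 1152) (4 ^ J) (4 ^ K) (by linarith) hc1 hx4
    (by
      calc 2 ≤ 4 ^ 1 := by norm_num
        _ ≤ 4 ^ J := Nat.pow_le_pow_right (by norm_num) (by omega))
    (Nat.one_le_pow _ _ (by norm_num))
    (by
      rw [← hxt, ← Real.rpow_mul (by norm_num)]
      push_cast
      rw [← Real.rpow_natCast]
      apply Real.rpow_le_rpow_of_exponent_le (by norm_num)
      linarith)
    (by
      rw [Real.sqrt_eq_rpow, ← hxt, ← Real.rpow_mul (by norm_num)]
      push_cast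
      rw [← pow_mul, ← Real.rpow_natCast]
      apply Real.rpow_le_rpow_of_exponent_le (by norm_num)
      push_cast
      linarith)
    (by positivity)
    (by
      have h1 : B / 6 ≤ ∑ p ∈ Ioc ((4:ℕ) ^ J) (4 ^ K) with p.Prime, (1:ℝ) / p := by linarith
      calc 3 * (B * Real.log x / 1152) = B / 6 * (Real.log x / 64) := by ring
        _ ≤ _ := by
          refine mul_le_mul h1 (hKt.trans hKlog) (by positivity) ?_
          exact le_trans (by positivity) h1)
  refine hTb.trans ?_
  have e1 : (x + 1) / (B * Real.log x / 1152) ≤ ε / 4 * (x / Real.log x) := by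
    calc (x + 1) / (B * Real.log x / 1152) ≤ (2 * x) / (B * Real.log x / 1152) := by
          gcongr
          linarith
      _ = ε / 4 * (x / Real.log x) := by
          rw [hB]; field_simp; norm_num
  have e2 : ε * (x / (2 * Real.log x)) ≤ ε * primePi x := by gcongr
  have e3 : ε * (x / (2 * Real.log x)) = ε / 4 * (x / Real.log x) + ε / 4 * (x / Real.log x) := by
    field_simp; ring
  linarith
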